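/- Let 1 ≤ p < ∞ and 0 < s < 1, and let σ : ℝ^N → (0,∞) be a screening function with 0 < inf_{ℝ^N} σ ≤ sup_{ℝ^N} σ < ∞. Then for every f ∈ W̃^{s,p}_{(σ)}(ℝ^N) and every ε > 0 there exists g ∈ C^∞(ℝ^N) ∩ W̃^{s,p}_{(σ)}(ℝ^N) with |f − g|_{W̃^{s,p}_{(σ)}(ℝ^N)} ≤ ε; that is, smooth functions are dense in W̃^{s,p}_{(σ)}(ℝ^N) with respect to its seminorm. -/

import Mathlib

open MeasureTheory Metric
open scoped ENNReal

/-- The screened homogeneous fractional Sobolev seminorm on all of `ℝ^N`: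
`|f|_{W̃^{s,p}_{(σ)}(ℝ^N)} = (∫_{ℝ^N} ∫_{B(0,σ(x))} |f(x+h)-f(x)|^p / |h|^{sp+N} dh dx)^{1/p}`,
valued in `ℝ≥0∞`, for a real-valued screening function `σ`. -/
noncomputable def screenedSeminormR (N : ℕ) (s p : ℝ)
    (σ : EuclideanSpace ℝ (Fin N) → ℝ)
    (f : EuclideanSpace ℝ (Fin N) → ℝ) : ℝ≥0∞ :=
  (∫⁻ x, ∫⁻ h in Metric.ball (0 : EuclideanSpace ℝ (Fin N)) (σ x),
      ENNReal.ofReal (|f (x + h) - f x| ^ p / ‖h‖ ^ (s * p + N))) ^ (1 / p)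

/-!
For a constant screening function the seminorm of `f` is the `L^p(E × E)` norm of
`D f (x, h) = w(h) (f(x + h) - f(x))`, where `w` is a power of `‖h‖` cut off to a ball. Mollifying
`f` averages `D f` over translations in the `x` direction, so by Minkowski's integral inequality
and the continuity of translations in `L^p`, mollifications of `f` converge to `f` in the seminorm.

Since `f(x + h) - f(x)` is the sum of two increments over `h / 2`, finiteness of the seminorm at
radius `R` gives finiteness at radius `2 R`, hence at every radius. If `m ≤ σ ≤ M` with `0 < m`,
the seminorm for `σ` lies between those for `m` and `M`, so `f` may be approximated at radius `M`.
-/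

open Filter Function Set
open scoped Convolution Topology

section Lp

theorem tendsto_eLpNorm_translate_sub {V F : Type*} [AddGroup V] [TopologicalSpace V]
    [IsTopologicalAddGroup V] [MeasurableSpace V] [BorelSpace V] [NormedAddCommGroup F]
    {μ : Measure V} [IsLocallyFiniteMeasure μ] [μ.InnerRegularCompactLTTop]
    [μ.IsAddLeftInvariant] {q : ℝ≥0∞} (hq : 1 ≤ q) (hq' : q ≠ ⊤) {f : V → F} (hf : MemLp f q μ) :
    Tendsto (fun v ↦ eLpNorm (fun z ↦ f (v + z) - f z) q μ) (𝓝 0) (𝓝 0) := by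
  have : Fact (1 ≤ q) := ⟨hq⟩
  have : Fact (q ≠ ⊤) := ⟨hq'⟩
  have continuous_translate : Continuous fun v : V ↦ DomAddAct.mk v +ᵥ hf.toLp f :=
    DomAddAct.continuous_mk.vadd continuous_const
  have edist_translate (v : V) : edist (DomAddAct.mk v +ᵥ hf.toLp f) (hf.toLp f) =
      eLpNorm (fun z ↦ f (v + z) - f z) q μ := by
    simp only [DomAddAct.mk_vadd_toLp, Lp.edist_toLp_toLp, Pi.sub_def, vadd_eq_add]
  have continuous_edist := continuous_translate.edist (continuous_const (y := hf.toLp f))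
  simp only [edist_translate] at continuous_edist
  exact continuous_edist.tendsto' 0 0 (by simp)

theorem memLp_comp_linearEquiv {V F : Type*} [NormedAddCommGroup V] [NormedSpace ℝ V]
    [FiniteDimensional ℝ V] [MeasurableSpace V] [BorelSpace V] [NormedAddCommGroup F]
    {μ : Measure V} [μ.IsAddHaarMeasure] {q : ℝ≥0∞} {f : V → F} (hf : MemLp f q μ)
    (S : V ≃ₗ[ℝ] V) : MemLp (fun z ↦ f (S z)) q μ := by
  have map_S : Measure.map S μ = _ :=
    Measure.map_linearMap_addHaar_eq_smul_addHaar μ (LinearEquiv.isUnit_det' S).ne_zero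
  have measurable_S : Measurable S :=
    (S : V →ₗ[ℝ] V).continuous_of_finiteDimensional.measurable
  refine MemLp.comp_of_map (f := S) ?_ measurable_S.aemeasurable
  rw [map_S]
  exact hf.smul_measure ENNReal.ofReal_ne_top

variable {α β F : Type*} [MeasurableSpace α] [MeasurableSpace β] [NormedAddCommGroup F]
  {ν : Measure α} [IsProbabilityMeasure ν]

theorem rpow_lintegral_enorm_le_lintegral_rpow_enorm {p : ℝ} (hp : 1 ≤ p) {X : α → F}
    (hX : AEStronglyMeasurable X ν) : (∫⁻ t, ‖X t‖ₑ ∂ν) ^ p ≤ ∫⁻ t, ‖X t‖ₑ ^ p ∂ν := by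
  have hp0 : 0 < p := zero_lt_one.trans_le hp
  have lintegral_le : ∫⁻ t, ‖X t‖ₑ ∂ν ≤ eLpNorm' X p ν := by
    simpa [eLpNorm'] using eLpNorm'_le_eLpNorm'_of_exponent_le zero_lt_one hp ν hX
  rw [lintegral_rpow_enorm_eq_rpow_eLpNorm' hp0]
  gcongr

theorem eLpNorm_integral_le_of_ae_le [NormedSpace ℝ F] {μ : Measure β} [SFinite μ] {q : ℝ≥0∞}
    (hq : 1 ≤ q) (hq' : q ≠ ⊤) {H : α → β → F}
    (hH : AEStronglyMeasurable (uncurry H) (ν.prod μ)) {C : ℝ≥0∞}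
    (hC : ∀ᵐ t ∂ν, eLpNorm (H t) q μ ≤ C) :
    eLpNorm (fun z ↦ ∫ t, H t z ∂ν) q μ ≤ C := by
  lift q to NNReal using hq'
  have hq1 : (1 : ℝ) ≤ q := by exact_mod_cast hq
  have hq0 : q ≠ 0 := by rintro rfl; norm_num at hq1
  rw [← ENNReal.rpow_le_rpow_iff (zero_lt_one.trans_le hq1), eLpNorm_nnreal_pow_eq_lintegral hq0]
  calc ∫⁻ z, ‖∫ t, H t z ∂ν‖ₑ ^ (q : ℝ) ∂μ
      ≤ ∫⁻ z, ∫⁻ t, ‖H t z‖ₑ ^ (q : ℝ) ∂ν ∂μ := by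
        refine lintegral_mono_ae ?_
        filter_upwards [hH.prod_swap.prodMk_left] with z hz
        refine le_trans ?_ (rpow_lintegral_enorm_le_lintegral_rpow_enorm hq1 hz)
        gcongr
        exact enorm_integral_le_lintegral_enorm _
    _ = ∫⁻ t, ∫⁻ z, ‖H t z‖ₑ ^ (q : ℝ) ∂μ ∂ν :=
        (lintegral_lintegral_swap (hH.enorm.pow_const _)).symm
    _ ≤ ∫⁻ _, C ^ (q : ℝ) ∂ν := by
        refine lintegral_mono_ae (hC.mono fun t ht ↦ ?_)
        rw [← eLpNorm_nnreal_pow_eq_lintegral hq0]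
        gcongr
    _ = C ^ (q : ℝ) := by simp

end Lp

section BumpMeasure

variable {E F : Type*} [NormedAddCommGroup E] [NormedSpace ℝ E] [FiniteDimensional ℝ E]
  [MeasurableSpace E] [BorelSpace E] [NormedAddCommGroup F] [NormedSpace ℝ F]

/-- The probability measure whose density with respect to `μ` is the normalized bump function `φ`.
Mollification by `φ` averages translates of a function against this measure. -/
noncomputable def bumpMeasure {c : E} (φ : ContDiffBump c) (μ : Measure E) : Measure E :=
  μ.withDensity fun t ↦ ENNReal.ofReal (φ.normed μ t)

variable {μ : Measure E}

theorem measurable_ofReal_normed {c : E} (φ : ContDiffBump c) :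
    Measurable fun t ↦ ENNReal.ofReal (φ.normed μ t) :=
  φ.continuous_normed.measurable.ennreal_ofReal

instance isProbabilityMeasure_bumpMeasure [IsLocallyFiniteMeasure μ]
    [μ.IsOpenPosMeasure] {c : E} (φ : ContDiffBump c) :
    IsProbabilityMeasure (bumpMeasure φ μ) where
  measure_univ := by
    rw [bumpMeasure, withDensity_apply _ MeasurableSet.univ, Measure.restrict_univ,
      ← ofReal_integral_eq_lintegral_ofReal φ.integrable_normed (ae_of_all _ φ.nonneg_normed),
      φ.integral_normed, ENNReal.ofReal_one]

theorem ae_bumpMeasure_mem_ball [IsLocallyFiniteMeasure μ] [μ.IsOpenPosMeasure] {c : E}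
    (φ : ContDiffBump c) :
    ∀ᵐ t ∂bumpMeasure φ μ, t ∈ ball c φ.rOut := by
  rw [bumpMeasure, ae_withDensity_iff (measurable_ofReal_normed φ)]
  refine ae_of_all _ fun t ht ↦ ?_
  rw [← φ.support_normed_eq (μ := μ)]
  exact fun h0 ↦ ht (by rw [h0, ENNReal.ofReal_zero])

theorem integral_bumpMeasure {c : E} (φ : ContDiffBump c) (g : E → F) :
    ∫ t, g t ∂bumpMeasure φ μ = ∫ t, φ.normed μ t • g t ∂μ := by
  rw [bumpMeasure, integral_withDensity_eq_integral_toReal_smul (measurable_ofReal_normed φ)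
    (ae_of_all _ fun _ ↦ ENNReal.ofReal_lt_top)]
  simp only [ENNReal.toReal_ofReal (φ.nonneg_normed _)]

theorem integrable_comp_sub_bumpMeasure [μ.IsAddHaarMeasure] (φ : ContDiffBump (0 : E)) {f : E → F}
    (hf : LocallyIntegrable f μ) (x : E) : Integrable (fun t ↦ f (x - t)) (bumpMeasure φ μ) := by
  rw [bumpMeasure, integrable_withDensity_iff_integrable_smul' (measurable_ofReal_normed φ)
    (ae_of_all _ fun _ ↦ ENNReal.ofReal_lt_top)]
  simp only [ENNReal.toReal_ofReal (φ.nonneg_normed _)]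
  exact (φ.hasCompactSupport_normed.convolutionExists_left (ContinuousLinearMap.lsmul ℝ ℝ)
    φ.continuous_normed hf x).integrable

end BumpMeasure

section WeightedDiff

/-- The weighted difference `(x, h) ↦ w(h) (u(x + h) - u(x))`. For `w(h) = |h|^{-α/p}` cut off to
a ball, its `L^p` norm on `E × E` is the seminorm with constant screening function. -/
def weightedDiff {E F : Type*} [Add E] [AddCommGroup F] [Module ℝ F] (w : E → ℝ) (u : E → F)
    (z : E × E) : F :=
  w z.2 • (u (z.1 + z.2) - u z.1)

theorem weightedDiff_sub {E F : Type*} [Add E] [AddCommGroup F] [Module ℝ F] (w : E → ℝ)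
    (u v : E → F) : weightedDiff w (u - v) = weightedDiff w u - weightedDiff w v := by
  ext z
  simp only [weightedDiff, Pi.sub_apply, smul_sub]
  abel

theorem aestronglyMeasurable_weightedDiff {E F : Type*} [AddGroup E] [MeasurableSpace E]
    [MeasurableAdd₂ E] [NormedAddCommGroup F] [NormedSpace ℝ F] {μ : Measure E} [SFinite μ]
    [μ.IsAddLeftInvariant] {w : E → ℝ} (hw : AEStronglyMeasurable w μ) {u : E → F}
    (hu : AEStronglyMeasurable u μ) :
    AEStronglyMeasurable (weightedDiff w u) (μ.prod μ) :=
  hw.comp_snd.smul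
    ((hu.comp_quasiMeasurePreserving (quasiMeasurePreserving_add μ μ)).sub hu.comp_fst)

variable {E F : Type*} [NormedAddCommGroup E] [NormedSpace ℝ E] [FiniteDimensional ℝ E]
  [MeasurableSpace E] [BorelSpace E] [NormedAddCommGroup F] [NormedSpace ℝ F]
  {μ : Measure E} [μ.IsAddHaarMeasure] {q : ℝ≥0∞} {w : E → ℝ} {f : E → F}

theorem weightedDiff_convolution_sub [CompleteSpace F] (φ : ContDiffBump (0 : E)) (w : E → ℝ)
    (hf : LocallyIntegrable f μ) (z : E × E) :
    weightedDiff w ((φ.normed μ ⋆[ContinuousLinearMap.lsmul ℝ ℝ, μ] f) - f) z =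
      ∫ t, (weightedDiff w f ((-t, 0) + z) - weightedDiff w f z) ∂bumpMeasure φ μ := by
  obtain ⟨x, h⟩ := z
  have convolution_eq (y : E) : (φ.normed μ ⋆[ContinuousLinearMap.lsmul ℝ ℝ, μ] f) y =
      ∫ t, f (y - t) ∂bumpMeasure φ μ := (integral_bumpMeasure φ _).symm
  have int_far := integrable_comp_sub_bumpMeasure φ hf (x + h)
  have int_near := integrable_comp_sub_bumpMeasure φ hf x
  have translate (t : E) : weightedDiff w f ((-t, 0) + (x, h)) =
      w h • (f (x + h - t) - f (x - t)) := by
    simp only [weightedDiff, Prod.mk_add_mk, zero_add, neg_add_eq_sub, sub_add_eq_add_sub]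
  simp only [translate]
  have int_weighted : Integrable (fun t ↦ w h • (f (x + h - t) - f (x - t))) (bumpMeasure φ μ) :=
    (int_far.sub int_near).smul (w h)
  rw [integral_sub int_weighted (integrable_const _), integral_smul,
    integral_sub int_far int_near, integral_const, probReal_univ, one_smul]
  simp only [weightedDiff, Pi.sub_apply, convolution_eq, smul_sub]
  abel

theorem eLpNorm_weightedDiff_convolution_sub_le [CompleteSpace F] (hq : 1 ≤ q) (hq' : q ≠ ⊤)
    (φ : ContDiffBump (0 : E)) (hf : LocallyIntegrable f μ)
    (hwf : AEStronglyMeasurable (weightedDiff w f) (μ.prod μ)) {C : ℝ≥0∞}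
    (hC : ∀ t ∈ ball (0 : E) φ.rOut,
      eLpNorm (fun z ↦ weightedDiff w f ((-t, 0) + z) - weightedDiff w f z) q (μ.prod μ) ≤ C) :
    eLpNorm (weightedDiff w ((φ.normed μ ⋆[ContinuousLinearMap.lsmul ℝ ℝ, μ] f) - f)) q
      (μ.prod μ) ≤ C := by
  have quasi_translate : Measure.QuasiMeasurePreserving
      (fun y : E × E × E ↦ ((-y.1, 0) + y.2 : E × E)) ((bumpMeasure φ μ).prod (μ.prod μ))
      (μ.prod μ) :=
    QuasiMeasurePreserving.prod_of_right (by fun_prop)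
      (ae_of_all _ fun t ↦ (measurePreserving_add_left (μ.prod μ) (-t, 0)).quasiMeasurePreserving)
  rw [funext (weightedDiff_convolution_sub φ w hf)]
  exact eLpNorm_integral_le_of_ae_le hq hq'
    ((hwf.comp_quasiMeasurePreserving quasi_translate).sub hwf.comp_snd)
    ((ae_bumpMeasure_mem_ball φ).mono hC)

theorem exists_contDiff_eLpNorm_weightedDiff_sub_le [CompleteSpace F] (hq : 1 ≤ q) (hq' : q ≠ ⊤)
    (hf : LocallyIntegrable f μ) (hwf : MemLp (weightedDiff w f) q (μ.prod μ)) {ε : ℝ≥0∞}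
    (hε : ε ≠ 0) :
    ∃ g : E → F, ContDiff ℝ (⊤ : ℕ∞) g ∧ eLpNorm (weightedDiff w (f - g)) q (μ.prod μ) ≤ ε := by
  have tendsto_shift : Tendsto (fun t : E ↦ ((-t, 0) : E × E)) (𝓝 0) (𝓝 0) :=
    Continuous.tendsto' (by fun_prop) _ _ (by simp)
  obtain ⟨δ, hδ, translate_le⟩ := Metric.eventually_nhds_iff_ball.mp <|
    ((tendsto_eLpNorm_translate_sub hq hq' hwf).comp tendsto_shift).eventually
      (ge_mem_nhds hε.bot_lt)
  let φ : ContDiffBump (0 : E) := ⟨δ / 2, δ, half_pos hδ, half_lt_self hδ⟩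
  refine ⟨φ.normed μ ⋆[ContinuousLinearMap.lsmul ℝ ℝ, μ] f,
    φ.hasCompactSupport_normed.contDiff_convolution_left _ φ.contDiff_normed hf, ?_⟩
  rw [weightedDiff_sub, eLpNorm_sub_comm, ← weightedDiff_sub]
  exact eLpNorm_weightedDiff_convolution_sub_le hq hq' φ hf hwf.1 translate_le

end WeightedDiff

section TruncatedPower

variable {E F : Type*} [NormedAddCommGroup E]

/-- The weight `h ↦ ‖h‖ ^ a` cut off to the open ball of radius `R` about the origin.
For `a < 0` its value at the origin is `0`, the junk value of `Real.rpow`. -/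
noncomputable def truncatedPower (a R : ℝ) : E → ℝ :=
  (ball 0 R).indicator fun h ↦ ‖h‖ ^ a

theorem measurable_truncatedPower [MeasurableSpace E] [OpensMeasurableSpace E] (a R : ℝ) :
    Measurable (truncatedPower a R : E → ℝ) :=
  (measurable_norm.pow_const a).indicator measurableSet_ball

theorem truncatedPower_two_mul [NormedSpace ℝ E] (a R : ℝ) (h : E) :
    truncatedPower a (2 * R) h = 2 ^ a * truncatedPower a R ((2⁻¹ : ℝ) • h) := by
  have norm_half : ‖(2⁻¹ : ℝ) • h‖ = 2⁻¹ * ‖h‖ := by simp [norm_smul]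
  have mem_iff : (2⁻¹ : ℝ) • h ∈ ball 0 R ↔ h ∈ ball 0 (2 * R) := by
    rw [mem_ball_zero_iff, mem_ball_zero_iff, norm_half, inv_mul_lt_iff₀ two_pos]
  by_cases hh : h ∈ ball 0 (2 * R)
  · rw [truncatedPower, truncatedPower, indicator_of_mem hh, indicator_of_mem (mem_iff.mpr hh),
      norm_half, ← Real.mul_rpow (by positivity) (by positivity), mul_inv_cancel_left₀ two_ne_zero]
  · rw [truncatedPower, truncatedPower, indicator_of_notMem hh,
      indicator_of_notMem (mt mem_iff.mp hh), mul_zero]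

theorem weightedDiff_truncatedPower_of_le [AddCommGroup F] [Module ℝ F] (a : ℝ) {R R' : ℝ}
    (hR : R ≤ R') (u : E → F) :
    weightedDiff (truncatedPower a R) u =
      (Prod.snd ⁻¹' ball 0 R).indicator (weightedDiff (truncatedPower a R') u) := by
  ext z
  by_cases hz : z.2 ∈ ball 0 R
  · rw [indicator_of_mem (mem_preimage.mpr hz)]
    simp only [weightedDiff, truncatedPower, indicator_of_mem hz,
      indicator_of_mem (ball_subset_ball hR hz)]
  · rw [indicator_of_notMem (mt mem_preimage.mp hz)]
    simp only [weightedDiff, truncatedPower, indicator_of_notMem hz, zero_smul]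

theorem weightedDiff_truncatedPower_two_mul [NormedSpace ℝ E] [AddCommGroup F] [Module ℝ F]
    (a R : ℝ) (u : E → F) (x h : E) :
    weightedDiff (truncatedPower a (2 * R)) u (x, h) =
      (2 ^ a : ℝ) • (weightedDiff (truncatedPower a R) u (x + (2⁻¹ : ℝ) • h, (2⁻¹ : ℝ) • h) +
        weightedDiff (truncatedPower a R) u (x, (2⁻¹ : ℝ) • h)) := by
  have add_halves : x + (2⁻¹ : ℝ) • h + (2⁻¹ : ℝ) • h = x + h := by
    rw [add_assoc, ← add_smul]
    norm_num
  simp only [weightedDiff, truncatedPower_two_mul, add_halves, mul_smul, ← smul_add,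
    sub_add_sub_cancel]

variable [NormedSpace ℝ E] [FiniteDimensional ℝ E] [MeasurableSpace E] [BorelSpace E]
  [NormedAddCommGroup F] [NormedSpace ℝ F] {μ : Measure E} [μ.IsAddHaarMeasure] {q : ℝ≥0∞}
  {a R : ℝ} {u : E → F}

theorem memLp_weightedDiff_truncatedPower_two_mul
    (hu : MemLp (weightedDiff (truncatedPower a R) u) q (μ.prod μ)) :
    MemLp (weightedDiff (truncatedPower a (2 * R)) u) q (μ.prod μ) := by
  have hu_shear := hu.comp_measurePreserving (measurePreserving_add_prod μ μ)
  let halve : (E × E) ≃ₗ[ℝ] E × E :=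
    (LinearEquiv.refl ℝ E).prodCongr (LinearEquiv.smulOfNeZero ℝ E 2⁻¹ (by norm_num))
  have eq_sum : weightedDiff (truncatedPower a (2 * R)) u =
      (2 ^ a : ℝ) • ((fun z ↦ (weightedDiff (truncatedPower a R) u ∘ fun z ↦ (z.1 + z.2, z.2))
        (halve z)) + fun z ↦ weightedDiff (truncatedPower a R) u (halve z)) :=
    funext fun z ↦ weightedDiff_truncatedPower_two_mul a R u z.1 z.2
  rw [eq_sum]
  exact ((memLp_comp_linearEquiv hu_shear halve).add
    (memLp_comp_linearEquiv hu halve)).const_smul (2 ^ a : ℝ)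

theorem memLp_weightedDiff_truncatedPower_of_pos (hR : 0 < R)
    (hu : MemLp (weightedDiff (truncatedPower a R) u) q (μ.prod μ)) (R' : ℝ) :
    MemLp (weightedDiff (truncatedPower a R') u) q (μ.prod μ) := by
  have doubled (n : ℕ) :
      MemLp (weightedDiff (truncatedPower a (2 ^ n * R)) u) q (μ.prod μ) := by
    induction n with
    | zero => simpa using hu
    | succ n ih => simpa only [pow_succ', mul_assoc] using
        memLp_weightedDiff_truncatedPower_two_mul ih
  obtain ⟨n, hn⟩ := pow_unbounded_of_one_lt (R' / R) one_lt_two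
  rw [weightedDiff_truncatedPower_of_le a ((div_lt_iff₀ hR).mp hn).le u]
  exact (doubled n).indicator (measurable_snd measurableSet_ball)

end TruncatedPower

section ScreenedSeminorm

variable {E F : Type*} [NormedAddCommGroup E] [MeasurableSpace E] [NormedAddCommGroup F]

/-- The screened seminorm of exponent `p` with screening function `σ` for maps between normed
spaces, with an arbitrary power `‖h‖ ^ α` in place of `‖h‖ ^ (s * p + N)`. -/
noncomputable def screenedSeminorm (μ : Measure E) (α p : ℝ) (σ : E → ℝ) (u : E → F) : ℝ≥0∞ :=
  (∫⁻ x, ∫⁻ h in ball 0 (σ x), ENNReal.ofReal (‖u (x + h) - u x‖ ^ p / ‖h‖ ^ α) ∂μ ∂μ) ^ (1 / p)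

variable {μ : Measure E} {α p R : ℝ} {σ τ : E → ℝ} {u f : E → F}

theorem screenedSeminorm_mono (hp : 0 ≤ p) (hστ : ∀ x, σ x ≤ τ x) :
    screenedSeminorm μ α p σ u ≤ screenedSeminorm μ α p τ u := by
  refine ENNReal.rpow_le_rpow ?_ (one_div_nonneg.mpr hp)
  exact lintegral_mono fun x ↦ lintegral_mono_set (ball_subset_ball (hστ x))

theorem screenedSeminorm_const [BorelSpace E] [SecondCountableTopology E] [SFinite μ]
    [μ.IsAddLeftInvariant] [NormedSpace ℝ F] (hp : 0 < p) (hu : AEStronglyMeasurable u μ) :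
    screenedSeminorm μ α p (fun _ ↦ R) u =
      eLpNorm (weightedDiff (truncatedPower (-(α / p)) R) u) (ENNReal.ofReal p) (μ.prod μ) := by
  have meas := aestronglyMeasurable_weightedDiff
    (measurable_truncatedPower (-(α / p)) R).aestronglyMeasurable hu
  rw [eLpNorm_eq_lintegral_rpow_enorm_toReal (ENNReal.ofReal_pos.mpr hp).ne' ENNReal.ofReal_ne_top,
    ENNReal.toReal_ofReal hp.le, lintegral_prod _ (meas.enorm.pow_const p), screenedSeminorm]
  congr 1
  refine lintegral_congr fun x ↦ ?_
  rw [← lintegral_indicator measurableSet_ball]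
  refine lintegral_congr fun h ↦ ?_
  by_cases hh : h ∈ ball 0 R
  · have weight_rpow : (‖h‖ ^ (-(α / p))) ^ p = (‖h‖ ^ α)⁻¹ := by
      rw [← Real.rpow_mul (norm_nonneg h), ← Real.rpow_neg (norm_nonneg h), neg_mul,
        div_mul_cancel₀ α hp.ne']
    simp only [weightedDiff, truncatedPower, indicator_of_mem hh]
    rw [← ofReal_norm, ENNReal.ofReal_rpow_of_nonneg (norm_nonneg _) hp.le, norm_smul,
      Real.mul_rpow (norm_nonneg _) (norm_nonneg _), Real.norm_of_nonneg (by positivity),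
      weight_rpow, div_eq_inv_mul]
  · simp only [weightedDiff, truncatedPower, indicator_of_notMem hh, zero_smul, enorm_zero,
      ENNReal.zero_rpow_of_pos hp]

theorem screenedSeminorm_const_lt_top_iff [BorelSpace E] [SecondCountableTopology E] [SFinite μ]
    [μ.IsAddLeftInvariant] [NormedSpace ℝ F] (hp : 0 < p) (hu : AEStronglyMeasurable u μ) :
    screenedSeminorm μ α p (fun _ ↦ R) u < ⊤ ↔
      MemLp (weightedDiff (truncatedPower (-(α / p)) R) u) (ENNReal.ofReal p) (μ.prod μ) := by
  rw [screenedSeminorm_const hp hu]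
  exact (and_iff_right <| aestronglyMeasurable_weightedDiff
    (measurable_truncatedPower (-(α / p)) R).aestronglyMeasurable hu).symm

variable [NormedSpace ℝ E] [FiniteDimensional ℝ E] [BorelSpace E] [NormedSpace ℝ F]
  [μ.IsAddHaarMeasure]

theorem screenedSeminorm_const_lt_top_of_pos (hp : 0 < p) (hR : 0 < R)
    (hu : AEStronglyMeasurable u μ) (hfin : screenedSeminorm μ α p (fun _ ↦ R) u < ⊤) (R' : ℝ) :
    screenedSeminorm μ α p (fun _ ↦ R') u < ⊤ := by
  rw [screenedSeminorm_const_lt_top_iff hp hu] at hfin ⊢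
  exact memLp_weightedDiff_truncatedPower_of_pos hR hfin R'

theorem exists_contDiff_screenedSeminorm_const_sub_le [CompleteSpace F] (hp : 1 ≤ p)
    (hf : LocallyIntegrable f μ) (hfin : screenedSeminorm μ α p (fun _ ↦ R) f < ⊤)
    {ε : ℝ} (hε : 0 < ε) :
    ∃ g : E → F, ContDiff ℝ (⊤ : ℕ∞) g ∧ screenedSeminorm μ α p (fun _ ↦ R) g < ⊤ ∧
      screenedSeminorm μ α p (fun _ ↦ R) (f - g) ≤ ENNReal.ofReal ε := by
  have hp0 : 0 < p := zero_lt_one.trans_le hp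
  have memLp_f := (screenedSeminorm_const_lt_top_iff hp0 hf.aestronglyMeasurable).mp hfin
  obtain ⟨g, hg, hfg⟩ := exists_contDiff_eLpNorm_weightedDiff_sub_le
    (ENNReal.one_le_ofReal.mpr hp) ENNReal.ofReal_ne_top hf memLp_f (ENNReal.ofReal_pos.mpr hε).ne'
  have hg_meas : AEStronglyMeasurable g μ := hg.continuous.aestronglyMeasurable
  have hfg_meas : AEStronglyMeasurable (f - g) μ := hf.aestronglyMeasurable.sub hg_meas
  rw [← screenedSeminorm_const hp0 hfg_meas] at hfg
  refine ⟨g, hg, ?_, hfg⟩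
  have memLp_fg := (screenedSeminorm_const_lt_top_iff hp0 hfg_meas).mp
    (hfg.trans_lt ENNReal.ofReal_lt_top)
  rw [screenedSeminorm_const_lt_top_iff hp0 hg_meas]
  simpa only [← weightedDiff_sub, sub_sub_cancel] using memLp_f.sub memLp_fg

end ScreenedSeminorm

theorem statement14_general {E F : Type*} [NormedAddCommGroup E] [NormedSpace ℝ E]
    [FiniteDimensional ℝ E] [MeasurableSpace E] [BorelSpace E] [NormedAddCommGroup F]
    [NormedSpace ℝ F] [CompleteSpace F] {μ : Measure E} [μ.IsAddHaarMeasure] {α p : ℝ}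
    (hp : 1 ≤ p) {σ : E → ℝ} {m M : ℝ} (hm : 0 < m) (hσ : ∀ x, m ≤ σ x ∧ σ x ≤ M) {f : E → F}
    (hf : LocallyIntegrable f μ) (hfσ : screenedSeminorm μ α p σ f < ⊤) {ε : ℝ} (hε : 0 < ε) :
    ∃ g : E → F, ContDiff ℝ (⊤ : ℕ∞) g ∧ LocallyIntegrable g μ ∧
      screenedSeminorm μ α p σ g < ⊤ ∧ screenedSeminorm μ α p σ (f - g) ≤ ENNReal.ofReal ε := by
  have hp0 : 0 < p := zero_lt_one.trans_le hp
  have finite_m : screenedSeminorm μ α p (fun _ ↦ m) f < ⊤ :=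
    (screenedSeminorm_mono hp0.le fun x ↦ (hσ x).1).trans_lt hfσ
  have finite_M := screenedSeminorm_const_lt_top_of_pos hp0 hm hf.aestronglyMeasurable finite_m M
  obtain ⟨g, hg, finite_g, hfg⟩ := exists_contDiff_screenedSeminorm_const_sub_le hp hf finite_M hε
  exact ⟨g, hg, hg.continuous.locallyIntegrable,
    (screenedSeminorm_mono hp0.le fun x ↦ (hσ x).2).trans_lt finite_g,
    (screenedSeminorm_mono hp0.le fun x ↦ (hσ x).2).trans hfg⟩

/-- Let `1 ≤ p < ∞`, `0 < s < 1`, and let `σ : ℝ^N → (0,∞)` be a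
screening function with `0 < inf σ ≤ sup σ < ∞`.  Then smooth functions are dense in
`W̃^{s,p}_{(σ)}(ℝ^N)` with respect to its seminorm: for every `f` in the space and every
`ε > 0` there exists `g ∈ C^∞(ℝ^N) ∩ W̃^{s,p}_{(σ)}(ℝ^N)` with
`|f - g|_{W̃^{s,p}_{(σ)}(ℝ^N)} ≤ ε`. -/
theorem statement14 (N : ℕ) (p s : ℝ) (hp : 1 ≤ p) (hs0 : 0 < s) (hs1 : s < 1)
    (σ : EuclideanSpace ℝ (Fin N) → ℝ) (hσlsc : LowerSemicontinuous σ)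
    (m M : ℝ) (hm : 0 < m) (hσbd : ∀ x, m ≤ σ x ∧ σ x ≤ M)
    (f : EuclideanSpace ℝ (Fin N) → ℝ)
    (hfloc : LocallyIntegrable f) (hf : screenedSeminormR N s p σ f < ⊤)
    (ε : ℝ) (hε : 0 < ε) :
    ∃ g : EuclideanSpace ℝ (Fin N) → ℝ,
      ContDiff ℝ (⊤ : ℕ∞) g ∧ LocallyIntegrable g ∧
      screenedSeminormR N s p σ g < ⊤ ∧
      screenedSeminormR N s p σ (fun x => f x - g x) ≤ ENNReal.ofReal ε := by
  exact statement14_general hp hm hσbd hfloc hf hε
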